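/- Let γ > 1 and let T be the Pikovsky map with parameter γ. There exists a constant C_γ > 0 depending only on γ such that for every n ≥ 1, every admissible tuple (ℓ₀,…,ℓ_p), and every integer 0 ≤ ℓ < n, λ(T^ℓ(C_n(ℓ₀,…,ℓ_p))) ≤ C_γ (n−ℓ)^{−γ/(γ−1)}. -/

import Mathlib

set_option autoImplicit false

open MeasureTheory Filter
open scoped ENNReal NNReal Topology

noncomputable section

/-- `T` is the Pikovsky map on `[-1,1]` with parameter `γ`: implicitly defined by
`x = (1+T(x))^γ/(2γ)` on `(0, 1/(2γ)]`, `x = T(x) + (1−T(x))^γ/(2γ)` on `[1/(2γ), 1]`, and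
the odd symmetry `T(x) = −T(−x)` on `[-1, 0)`. -/
def IsPikovsky (γ : ℝ) (T : ℝ → ℝ) : Prop :=
  (∀ x ∈ Set.Icc (-1:ℝ) 1, T x ∈ Set.Icc (-1:ℝ) 1) ∧
  (∀ x ∈ Set.Ioc (0:ℝ) (1/(2*γ)),
      T x ∈ Set.Icc (-1:ℝ) 0 ∧ x = (1 + T x) ^ γ / (2*γ)) ∧
  (∀ x ∈ Set.Icc (1/(2*γ)) 1,
      T x ∈ Set.Icc (0:ℝ) 1 ∧ x = T x + (1 - T x) ^ γ / (2*γ)) ∧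
  (∀ x ∈ Set.Ico (-1:ℝ) 0, T x = - T (-x))

/-- Lebesgue measure on `[-1,1]` normalized to a probability measure. -/
def pikMeasure : Measure ℝ := (2⁻¹ : ℝ≥0∞) • (volume.restrict (Set.Icc (-1:ℝ) 1))

instance : IsProbabilityMeasure pikMeasure := by
  constructor
  rw [pikMeasure, Measure.smul_apply, Measure.restrict_apply MeasurableSet.univ,
    Set.univ_inter, Real.volume_Icc, show ((1:ℝ) - -1 = 2) by norm_num,
    ENNReal.ofReal_ofNat, smul_eq_mul]
  exact ENNReal.inv_mul_cancel (by norm_num) (by norm_num)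

/-- The sup-norm of `f` on `[-1,1]`. -/
def supIcc (f : ℝ → ℝ) : ℝ := ⨆ x : Set.Icc (-1:ℝ) 1, |f (x:ℝ)|

/-- The Lipschitz seminorm of `f` on `[-1,1]`. -/
def lipIcc (f : ℝ → ℝ) : ℝ :=
  ⨆ p : (Set.Icc (-1:ℝ) 1) × (Set.Icc (-1:ℝ) 1),
    |f (p.1:ℝ) - f (p.2:ℝ)| / |(p.1:ℝ) - (p.2:ℝ)|

/-- `‖f‖_Lip = ‖f‖_∞ + Lip(f)` on `[-1,1]`. -/
def nLipIcc (f : ℝ → ℝ) : ℝ := supIcc f + lipIcc f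

/-- `Δ_n^-`: the sets `Δ₀^- = T⁻¹(M₊) ∩ M₋` and `Δ_n^- = T⁻¹(Δ_{n-1}^-) ∩ M₋`,
where `M₋ = (-1,0)` and `M₊ = (0,1)`. -/
def DeltaM (T : ℝ → ℝ) : ℕ → Set ℝ
  | 0 => T ⁻¹' (Set.Ioo (0:ℝ) 1) ∩ Set.Ioo (-1:ℝ) 0
  | n+1 => T ⁻¹' (DeltaM T n) ∩ Set.Ioo (-1:ℝ) 0

/-- `Δ_n^+`: the sets `Δ₀^+ = T⁻¹(M₋) ∩ M₊` and `Δ_n^+ = T⁻¹(Δ_{n-1}^+) ∩ M₊`. -/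
def DeltaP (T : ℝ → ℝ) : ℕ → Set ℝ
  | 0 => T ⁻¹' (Set.Ioo (-1:ℝ) 0) ∩ Set.Ioo (0:ℝ) 1
  | n+1 => T ⁻¹' (DeltaP T n) ∩ Set.Ioo (0:ℝ) 1

/-- `δ_n^- = T⁻¹(Δ_{n-1}^+) ∩ Δ₀^-` (for `n ≥ 1`). -/
def deltaMs (T : ℝ → ℝ) (n : ℕ) : Set ℝ := T ⁻¹' (DeltaP T (n-1)) ∩ DeltaM T 0

/-- `δ_n^+ = T⁻¹(Δ_{n-1}^-) ∩ Δ₀^+` (for `n ≥ 1`). -/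
def deltaPs (T : ℝ → ℝ) (n : ℕ) : Set ℝ := T ⁻¹' (DeltaM T (n-1)) ∩ DeltaP T 0

/-- `δ_n = δ_n^- ∪ δ_n^+`. -/
def smallDelta (T : ℝ → ℝ) (n : ℕ) : Set ℝ := deltaMs T n ∪ deltaPs T n

/-- `Δ_n = Δ_n^- ∪ Δ_n^+`. -/
def bigDelta (T : ℝ → ℝ) (n : ℕ) : Set ℝ := DeltaM T n ∪ DeltaP T n

/-- The base `Y = Δ₀^- ∪ Δ₀^+` of the first-return tower. -/
def Yset (T : ℝ → ℝ) : Set ℝ := DeltaM T 0 ∪ DeltaP T 0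

/-- Lebesgue measure on `Y` normalized to a probability measure. -/
def mY (T : ℝ → ℝ) : Measure ℝ := (volume (Yset T))⁻¹ • volume.restrict (Yset T)

/-- The first return time to `Y`: `τ(x) = inf {n ≥ 1 : Tⁿ(x) ∈ Y}`. -/
def tauY (T : ℝ → ℝ) (x : ℝ) : ℕ := sInf {n : ℕ | 1 ≤ n ∧ T^[n] x ∈ Yset T}

/-- The cylinder set `C_n(ℓ₀,…,ℓ_p) = (δ_{ℓ₀} ∪ Δ_{ℓ₀}) ∩ ⋂_{j<p} T^{-ℓ_j} δ_{ℓ_{j+1}-ℓ_j}`. -/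
def cylinder (T : ℝ → ℝ) (p : ℕ) (ℓ : ℕ → ℕ) : Set ℝ :=
  (smallDelta T (ℓ 0) ∪ bigDelta T (ℓ 0)) ∩
    ⋂ j ∈ Finset.range p, T^[ℓ j] ⁻¹' (smallDelta T (ℓ (j+1) - ℓ j))

/-!
Write `s = γ / (γ - 1)`. In the distance `v = 1 - t` to the neutral fixed point, the inverse branch
of `T` is `v ↦ v - v ^ γ / (2 * γ)`; under it `v ^ (1 - γ)` grows by at least a fixed amount, so
`Δ_n^±` and `δ_n^±` have diameter `O(n ^ (-s))`. Moreover `T^n` does not contract `Δ_n^±`, and it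
expands `δ_n^±` by at least the factor `2`.

For points `x`, `y` of a cylinder in the same initial cell, `d_j = |T^{ℓ_j} x - T^{ℓ_j} y|`
satisfies `d_j ≤ K (ℓ_{j+1} - ℓ_j) ^ (-s)` and `d_j ≤ d_{j+1} / 2`. If the first gap is at least a
fixed fraction of the total time, the first bound is already of the right order; otherwise most of
the time remains, and the factor `1 / 2` pays for the part that is lost. Hence
`|x - y| = O(ℓ_p ^ (-s))`. The image of a cylinder under `T^m`, `m < ℓ_p`, lies in a cylinder with
last time `ℓ_p - m`, which reduces the estimate to `m = 0`.
-/

section Measure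

lemma volume_le_card_mul_of_subset_iUnion {ι : Type*} [Fintype ι] {S : Set ℝ} {c : ι → Set ℝ}
    {D : ℝ} (hS : S ⊆ ⋃ i, c i) (hD : ∀ i, ∀ x ∈ S ∩ c i, ∀ y ∈ S ∩ c i, |x - y| ≤ D) :
    volume S ≤ Fintype.card ι * ENNReal.ofReal D := by
  calc volume S = volume (⋃ i, S ∩ c i) := by
        rw [← Set.inter_iUnion, Set.inter_eq_left.2 hS]
    _ ≤ ∑ i, volume (S ∩ c i) := measure_iUnion_fintype_le _ _
    _ ≤ ∑ _i : ι, ENNReal.ofReal D := Finset.sum_le_sum fun i _ =>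
      (Real.volume_le_diam _).trans (Metric.ediam_le_of_forall_dist_le (hD i))
    _ = Fintype.card ι * ENNReal.ofReal D := by
      rw [Finset.sum_const, Finset.card_univ, nsmul_eq_mul]

lemma pikMeasure_le_volume (S : Set ℝ) : pikMeasure S ≤ volume S := by
  rw [pikMeasure, Measure.smul_apply, smul_eq_mul]
  exact (mul_le_of_le_one_left' (by norm_num)).trans (Measure.restrict_apply_le _ _)

end Measure

section RealPowers

lemma one_add_mul_le_one_sub_rpow_neg {p t : ℝ} (hp : 0 ≤ p) (ht : t < 1) :
    1 + p * t ≤ (1 - t) ^ (-p) := by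
  have hlog : Real.log (1 - t) ≤ -t := by
    linarith [Real.log_le_sub_one_of_pos (sub_pos.2 ht)]
  calc 1 + p * t ≤ Real.log (1 - t) * -p + 1 := by nlinarith
    _ ≤ Real.exp (Real.log (1 - t) * -p) := Real.add_one_le_exp _
    _ = (1 - t) ^ (-p) := (Real.rpow_def_of_pos (sub_pos.2 ht) _).symm

lemma rpow_neg_add_mul_le_rpow_neg {c p v : ℝ} (hp : 0 ≤ p) (hv : 0 < v) (hc : c * v ^ p < 1) :
    v ^ (-p) + p * c ≤ (v * (1 - c * v ^ p)) ^ (-p) := by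
  have hinv : v ^ (-p) * v ^ p = 1 := by rw [← Real.rpow_add hv, neg_add_cancel, Real.rpow_zero]
  calc v ^ (-p) + p * c = v ^ (-p) * (1 + p * (c * v ^ p)) := by linear_combination -(p * c) * hinv
    _ ≤ v ^ (-p) * (1 - c * v ^ p) ^ (-p) := by
      gcongr
      exact one_add_mul_le_one_sub_rpow_neg hp hc
    _ = (v * (1 - c * v ^ p)) ^ (-p) := (Real.mul_rpow hv.le (by linarith)).symm

lemma abs_rpow_sub_rpow_le {p v w : ℝ} (hp : 1 ≤ p) (hv : v ∈ Set.Icc (0 : ℝ) 1)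
    (hw : w ∈ Set.Icc (0 : ℝ) 1) : |v ^ p - w ^ p| ≤ p * |v - w| := by
  wlog hwv : w ≤ v generalizing v w
  · simpa only [abs_sub_comm] using this hw hv (le_of_not_ge hwv)
  rcases hwv.eq_or_lt with rfl | hlt
  · simp
  have hslope := (convexOn_rpow hp).slope_le_of_hasDerivAt hw.1 hv.1 hlt
    (Real.hasDerivAt_rpow_const (.inr hp))
  rw [slope_def_field, div_le_iff₀ (sub_pos.2 hlt)] at hslope
  have hderiv : p * v ^ (p - 1) ≤ p :=
    mul_le_of_le_one_right (by linarith) (Real.rpow_le_one hv.1 hv.2 (by linarith))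
  rw [abs_of_nonneg (sub_nonneg.2 (Real.rpow_le_rpow hw.1 hwv (by linarith))),
    abs_of_pos (sub_pos.2 hlt)]
  exact hslope.trans (mul_le_mul_of_nonneg_right hderiv (sub_nonneg.2 hwv))

/-- Either `a` is at least the fraction `1 - q` of `a + b`, or `b` is at least the fraction `q`. -/
lemma le_mul_add_rpow_neg {a b e q s A B C : ℝ} (ha : 0 < a) (hb : 0 < b) (hq : 0 < q)
    (hq1 : q < 1) (hs : 0 ≤ s) (hA : 0 ≤ A) (hB : 0 ≤ B)
    (heA : e ≤ A * a ^ (-s)) (heB : e ≤ B * b ^ (-s))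
    (hAC : A * (1 - q) ^ (-s) ≤ C) (hBC : B * q ^ (-s) ≤ C) :
    e ≤ C * (a + b) ^ (-s) := by
  have key : ∀ {D r c : ℝ}, 0 ≤ D → 0 < r → r * (a + b) ≤ c → e ≤ D * c ^ (-s) →
      D * r ^ (-s) ≤ C → e ≤ C * (a + b) ^ (-s) := by
    intro D r c hD hr hrc he hDC
    calc e ≤ D * c ^ (-s) := he
      _ ≤ D * (r * (a + b)) ^ (-s) := by
        gcongr D * ?_
        exact Real.rpow_le_rpow_of_nonpos (by positivity) hrc (by linarith)
      _ = D * r ^ (-s) * (a + b) ^ (-s) := by rw [Real.mul_rpow hr.le (by positivity), mul_assoc]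
      _ ≤ C * (a + b) ^ (-s) := by gcongr
  rcases le_total ((1 - q) * (a + b)) a with h | h
  · exact key hA (sub_pos.2 hq1) h heA hAC
  · exact key hB hq (by linarith) heB hBC

/-- The splitting ratio `q = θ ^ (1 / s)` makes the gain `θ` cancel the loss `q ^ (-s)`, so that
the constant does not grow with the number of steps. -/
lemma le_mul_rpow_neg_of_contraction {s θ K : ℝ} (hs : 0 < s) (hθ : 0 < θ) (hθ1 : θ < 1)
    (hK : 0 ≤ K) (p : ℕ) (d t : ℕ → ℝ) (ht : StrictMonoOn t (Set.Iic (p + 1)))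
    (hd : ∀ j ≤ p, d j ≤ K * (t (j + 1) - t j) ^ (-s)) (hstep : ∀ j < p, d j ≤ θ * d (j + 1)) :
    d 0 ≤ K * (1 - θ ^ (1 / s)) ^ (-s) * (t (p + 1) - t 0) ^ (-s) := by
  set q := θ ^ (1 / s)
  have hq : 0 < q := Real.rpow_pos_of_pos hθ _
  have hq1 : q < 1 := Real.rpow_lt_one hθ.le hθ1 (by positivity)
  have hθq : θ * q ^ (-s) = 1 := by
    rw [← Real.rpow_mul hθ.le, show 1 / s * -s = -1 by field_simp, Real.rpow_neg_one,
      mul_inv_cancel₀ hθ.ne']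
  set C := K * (1 - q) ^ (-s) with hC_def
  have : 0 ≤ C := mul_nonneg hK (Real.rpow_nonneg (by linarith) _)
  induction p generalizing d t with
  | zero =>
    have hpos : 0 < t 1 - t 0 := sub_pos.2 (ht (by simp) (by simp) one_pos)
    refine (hd 0 le_rfl).trans ?_
    gcongr
    exact le_mul_of_one_le_right hK (Real.one_le_rpow_of_pos_of_le_one_of_nonpos
      (by linarith) (by linarith) (by linarith))
  | succ p ih =>
    have htail : d 1 ≤ C * (t (p + 2) - t 1) ^ (-s) :=
      ih (fun j => d (j + 1)) (fun j => t (j + 1))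
        (fun i hi j hj hij => ht (Nat.succ_le_succ hi) (Nat.succ_le_succ hj) (Nat.succ_lt_succ hij))
        (fun j hj => hd (j + 1) (by omega)) (fun j hj => hstep (j + 1) (by omega))
    have hlt01 : t 0 < t 1 := ht (Nat.zero_le _) (by simp) one_pos
    have hlt : t 1 < t (p + 2) := ht (by simp) Set.self_mem_Iic (by omega)
    have hhead : d 0 ≤ θ * C * (t (p + 2) - t 1) ^ (-s) := by
      rw [mul_assoc]
      exact (hstep 0 p.succ_pos).trans (by gcongr)
    have := le_mul_add_rpow_neg (sub_pos.2 hlt01) (sub_pos.2 hlt) hq hq1 hs.le hK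
      (by positivity) (hd 0 (by omega)) hhead hC_def.ge (by rw [mul_right_comm, hθq, one_mul])
    rwa [add_comm, sub_add_sub_cancel] at this

end RealPowers

section NeutralBranch

/-- The inverse branch `t ↦ t + (1 - t) ^ γ / (2 * γ)` of the Pikovsky map at its neutral fixed
point `1`, written in the distance `v = 1 - t` to that point. -/
def neutralBranch (γ v : ℝ) : ℝ := v - v ^ γ / (2 * γ)

variable {γ v w : ℝ}

lemma neutralBranch_eq_mul (hγ : γ ≠ 0) (hv : 0 ≤ v) :
    neutralBranch γ v = v * (1 - 1 / (2 * γ) * v ^ (γ - 1)) := by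
  have hpow : v ^ γ = v * v ^ (γ - 1) := by
    rw [← Real.rpow_one_add' hv (by simpa using hγ), add_sub_cancel]
  rw [neutralBranch, hpow]
  ring

lemma neutralBranch_mem_Ioc (hγ : 1 ≤ γ) (hv : v ∈ Set.Ioc (0 : ℝ) 1) :
    neutralBranch γ v ∈ Set.Ioc (0 : ℝ) 1 := by
  have hpow : v ^ γ ≤ v := Real.rpow_le_self_of_le_one hv.1.le hv.2 hγ
  have hpow_nonneg : 0 ≤ v ^ γ := Real.rpow_nonneg hv.1.le _
  have hhalf : v ^ γ / (2 * γ) ≤ v / 2 := by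
    gcongr
    · exact hv.1.le
    · linarith
  have hnonneg : 0 ≤ v ^ γ / (2 * γ) := by positivity
  exact ⟨by unfold neutralBranch; linarith [hv.1], by unfold neutralBranch; linarith [hv.2]⟩

lemma monotoneOn_neutralBranch (hγ : 1 ≤ γ) :
    MonotoneOn (neutralBranch γ) (Set.Icc 0 1) := by
  intro w hw v hv hwv
  have hpow : (v ^ γ - w ^ γ) / (2 * γ) ≤ v - w := by
    rw [div_le_iff₀ (by linarith)]
    have := (le_abs_self _).trans (abs_rpow_sub_rpow_le hγ hv hw)
    rw [abs_of_nonneg (sub_nonneg.2 hwv)] at this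
    nlinarith
  rw [sub_div] at hpow
  unfold neutralBranch
  linarith

lemma abs_neutralBranch_sub_le (hγ : 1 ≤ γ) (hv : v ∈ Set.Icc (0 : ℝ) 1)
    (hw : w ∈ Set.Icc (0 : ℝ) 1) : |neutralBranch γ v - neutralBranch γ w| ≤ |v - w| := by
  wlog hwv : w ≤ v generalizing v w
  · simpa only [abs_sub_comm] using this hw hv (le_of_not_ge hwv)
  have hpow : w ^ γ / (2 * γ) ≤ v ^ γ / (2 * γ) := by
    gcongr
    exact hw.1
  rw [abs_of_nonneg (sub_nonneg.2 (monotoneOn_neutralBranch hγ hw hv hwv)),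
    abs_of_nonneg (sub_nonneg.2 hwv)]
  unfold neutralBranch
  linarith

lemma rpow_neg_add_le_neutralBranch_rpow_neg (hγ : 1 ≤ γ) (hv : v ∈ Set.Ioc (0 : ℝ) 1) :
    v ^ (-(γ - 1)) + (γ - 1) / (2 * γ) ≤ neutralBranch γ v ^ (-(γ - 1)) := by
  have hγ0 : γ ≠ 0 := by positivity
  have hpos : 0 < v * (1 - 1 / (2 * γ) * v ^ (γ - 1)) :=
    neutralBranch_eq_mul hγ0 hv.1.le ▸ (neutralBranch_mem_Ioc hγ hv).1
  have hlt : 1 / (2 * γ) * v ^ (γ - 1) < 1 := sub_pos.1 (pos_of_mul_pos_right hpos hv.1.le)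
  rw [neutralBranch_eq_mul hγ0 hv.1.le]
  simpa only [mul_one_div] using rpow_neg_add_mul_le_rpow_neg (sub_nonneg.2 hγ) hv.1 hlt

lemma neutralBranch_iterate_mem_Ioc (hγ : 1 ≤ γ) (n : ℕ) :
    (neutralBranch γ)^[n] 1 ∈ Set.Ioc (0 : ℝ) 1 :=
  Set.MapsTo.iterate (fun _ => neutralBranch_mem_Ioc hγ) n ⟨one_pos, le_rfl⟩

lemma add_one_mul_le_neutralBranch_iterate_rpow_neg (hγ : 1 ≤ γ) (n : ℕ) :
    (γ - 1) / (2 * γ) * (n + 1) ≤ (neutralBranch γ)^[n] 1 ^ (-(γ - 1)) := by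
  induction n with
  | zero =>
    have : (γ - 1) / (2 * γ) ≤ 1 := by
      rw [div_le_one (by linarith)]
      linarith
    simpa using this
  | succ n ih =>
    rw [Function.iterate_succ_apply']
    push_cast
    linarith [rpow_neg_add_le_neutralBranch_rpow_neg hγ (neutralBranch_iterate_mem_Ioc hγ n)]

/-- The constant `K` in the bound `K * n ^ (-(γ / (γ - 1)))` for the length of the intervals
`Δ_n^±` and `δ_n^±`. -/
def cellConst (γ : ℝ) : ℝ := ((γ - 1) / (2 * γ)) ^ (-(γ / (γ - 1))) / (2 * γ)

lemma cellConst_pos (hγ : 1 < γ) : 0 < cellConst γ := by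
  have : 0 < γ - 1 := sub_pos.2 hγ
  unfold cellConst
  positivity

lemma neutralBranch_iterate_sub_succ_le (hγ : 1 < γ) (n : ℕ) :
    (neutralBranch γ)^[n] 1 - (neutralBranch γ)^[n + 1] 1 ≤
      cellConst γ * ((n + 1 : ℕ) : ℝ) ^ (-(γ / (γ - 1))) := by
  have hγ1 : 0 < γ - 1 := sub_pos.2 hγ
  have hv := (neutralBranch_iterate_mem_Ioc hγ.le n).1
  set v := (neutralBranch γ)^[n] 1 with hv_def
  have hdecay : v ^ γ ≤ ((γ - 1) / (2 * γ) * (n + 1)) ^ (-(γ / (γ - 1))) := by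
    calc v ^ γ = (v ^ (-(γ - 1))) ^ (-(γ / (γ - 1))) := by
          rw [← Real.rpow_mul hv.le]
          congr 1
          field_simp
      _ ≤ _ := Real.rpow_le_rpow_of_nonpos (by positivity)
          (add_one_mul_le_neutralBranch_iterate_rpow_neg hγ.le n) (neg_nonpos.2 (by positivity))
  calc v - (neutralBranch γ)^[n + 1] 1 = v ^ γ / (2 * γ) := by
        rw [Function.iterate_succ_apply', ← hv_def, neutralBranch, sub_sub_cancel]
    _ ≤ ((γ - 1) / (2 * γ) * (n + 1)) ^ (-(γ / (γ - 1))) / (2 * γ) := by gcongr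
    _ = cellConst γ * ((n + 1 : ℕ) : ℝ) ^ (-(γ / (γ - 1))) := by
      rw [Real.mul_rpow (by positivity) (by positivity), cellConst, Nat.cast_succ]
      ring

end NeutralBranch

section Cells

/-- `Δ_n^+` for the sign `true` and `Δ_n^-` for the sign `false`. -/
def signedDelta (T : ℝ → ℝ) : Bool → ℕ → Set ℝ
  | true => DeltaP T
  | false => DeltaM T

/-- `δ_n^+` for the sign `true` and `δ_n^-` for the sign `false`. -/
def signedSmallDelta (T : ℝ → ℝ) : Bool → ℕ → Set ℝ
  | true => deltaPs T
  | false => deltaMs T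

variable {T : ℝ → ℝ} {σ : Bool} {n : ℕ} {x : ℝ}

lemma bigDelta_eq_iUnion (T : ℝ → ℝ) (n : ℕ) : bigDelta T n = ⋃ σ, signedDelta T σ n := by
  rw [bigDelta, Set.union_comm, Set.union_eq_iUnion]
  exact Set.iUnion_congr (Bool.rec rfl rfl)

lemma smallDelta_eq_iUnion (T : ℝ → ℝ) (n : ℕ) :
    smallDelta T n = ⋃ σ, signedSmallDelta T σ n := by
  rw [smallDelta, Set.union_comm, Set.union_eq_iUnion]
  exact Set.iUnion_congr (Bool.rec rfl rfl)

lemma DeltaP_subset_Ioo (T : ℝ → ℝ) (n : ℕ) : DeltaP T n ⊆ Set.Ioo 0 1 := by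
  cases n <;> exact Set.inter_subset_right

lemma DeltaM_subset_Ioo (T : ℝ → ℝ) (n : ℕ) : DeltaM T n ⊆ Set.Ioo (-1) 0 := by
  cases n <;> exact Set.inter_subset_right

lemma signedSmallDelta_subset (T : ℝ → ℝ) (σ : Bool) (n : ℕ) :
    signedSmallDelta T σ n ⊆ signedDelta T σ 0 := by
  cases σ <;> exact Set.inter_subset_right

lemma disjoint_signedDelta_not (T : ℝ → ℝ) (σ : Bool) (m n : ℕ) :
    Disjoint (signedDelta T σ m) (signedDelta T (!σ) n) := by
  have hdisj : ∀ k l, Disjoint (DeltaM T k) (DeltaP T l) := fun k l =>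
    Set.disjoint_of_subset (DeltaM_subset_Ioo T k) (DeltaP_subset_Ioo T l)
      (Set.disjoint_left.2 fun _ hneg hpos => lt_asymm hneg.2 hpos.1)
  cases σ
  exacts [hdisj m n, (hdisj n m).symm]

lemma mem_signedSmallDelta_of_mem_smallDelta (hσ : x ∈ signedDelta T σ 0)
    (hx : x ∈ smallDelta T n) : x ∈ signedSmallDelta T σ n := by
  rw [smallDelta_eq_iUnion, Set.mem_iUnion] at hx
  obtain ⟨τ, hτ⟩ := hx
  obtain rfl | rfl : τ = σ ∨ τ = !σ := by cases σ <;> cases τ <;> simp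
  · exact hτ
  · exact absurd (signedSmallDelta_subset T _ n hτ)
      (Set.disjoint_left.1 (disjoint_signedDelta_not T σ 0 0) hσ)

lemma mapsTo_signedDelta_succ (T : ℝ → ℝ) (σ : Bool) (n : ℕ) :
    Set.MapsTo T (signedDelta T σ (n + 1)) (signedDelta T σ n) := by
  cases σ <;> exact fun _ hx => hx.1

lemma mapsTo_signedSmallDelta_succ (T : ℝ → ℝ) (σ : Bool) (n : ℕ) :
    Set.MapsTo T (signedSmallDelta T σ (n + 1)) (signedDelta T (!σ) n) := by
  cases σ <;> exact fun _ hx => hx.1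

lemma mapsTo_iterate_signedDelta (T : ℝ → ℝ) (σ : Bool) (n : ℕ) :
    Set.MapsTo T^[n] (signedDelta T σ n) (signedDelta T σ 0) := by
  induction n with
  | zero => exact Set.mapsTo_id _
  | succ n ih => exact ih.comp (mapsTo_signedDelta_succ T σ n)

lemma mapsTo_iterate_signedSmallDelta (T : ℝ → ℝ) (σ : Bool) (hn : 1 ≤ n) :
    Set.MapsTo T^[n] (signedSmallDelta T σ n) (signedDelta T (!σ) 0) := by
  obtain ⟨n, rfl⟩ := Nat.exists_eq_add_of_le' hn
  exact (mapsTo_iterate_signedDelta T (!σ) n).comp (mapsTo_signedSmallDelta_succ T σ n)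

end Cells

namespace IsPikovsky

variable {γ : ℝ} {T : ℝ → ℝ} {σ : Bool} {n : ℕ} {x y : ℝ}

lemma map_neg (hT : IsPikovsky γ T) (hx : x ∈ Set.Ioo (-1 : ℝ) 0) : T (-x) = -T x := by
  rw [hT.2.2.2 x ⟨hx.1.le, hx.2⟩, neg_neg]

lemma eq_rpow_div_of_map_neg (hT : IsPikovsky γ T) (hx : x ∈ Set.Ioo (0 : ℝ) 1) (h : T x < 0) :
    x = (1 + T x) ^ γ / (2 * γ) := by
  obtain ⟨-, hinner, houter, -⟩ := hT
  rcases le_total x (1 / (2 * γ)) with hc | hc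
  · exact (hinner x ⟨hx.1, hc⟩).2
  · exact absurd (houter x ⟨hc, hx.2.le⟩).1.1 h.not_ge

lemma one_sub_eq_neutralBranch (hT : IsPikovsky γ T) (hx : x ∈ Set.Ioo (0 : ℝ) 1) (h : 0 < T x) :
    1 - x = neutralBranch γ (1 - T x) := by
  obtain ⟨-, hinner, houter, -⟩ := hT
  rcases le_total x (1 / (2 * γ)) with hc | hc
  · exact absurd (hinner x ⟨hx.1, hc⟩).1.2 h.not_ge
  · rw [neutralBranch]
    linarith [(houter x ⟨hc, hx.2.le⟩).2]

lemma neg_mem_DeltaP (hT : IsPikovsky γ T) (hx : x ∈ DeltaM T n) : -x ∈ DeltaP T n := by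
  have hneg : -x ∈ Set.Ioo (0 : ℝ) 1 := by
    have := DeltaM_subset_Ioo T n hx
    exact ⟨by linarith [this.2], by linarith [this.1]⟩
  induction n generalizing x with
  | zero =>
    refine ⟨?_, hneg⟩
    rw [Set.mem_preimage, hT.map_neg hx.2]
    exact ⟨neg_lt_neg hx.1.2, neg_lt_zero.2 hx.1.1⟩
  | succ n ih =>
    refine ⟨?_, hneg⟩
    rw [Set.mem_preimage, hT.map_neg hx.2]
    have := DeltaM_subset_Ioo T n hx.1
    exact ih hx.1 ⟨by linarith [this.2], by linarith [this.1]⟩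

lemma one_sub_mem_Icc_neutralBranch_iterate (hγ : 1 ≤ γ) (hT : IsPikovsky γ T)
    (hx : x ∈ DeltaP T n) :
    1 - x ∈ Set.Icc ((neutralBranch γ)^[n + 1] 1) ((neutralBranch γ)^[n] 1) := by
  induction n generalizing x with
  | zero =>
    have hTx : T x ∈ Set.Ioo (-1 : ℝ) 0 := hx.1
    have hle : x ≤ 1 / (2 * γ) := by
      rw [hT.eq_rpow_div_of_map_neg hx.2 hTx.2]
      gcongr
      exact Real.rpow_le_one (by linarith [hTx.1]) (by linarith [hTx.2]) (by linarith)
    simp only [zero_add, Function.iterate_one, Function.iterate_zero_apply, neutralBranch,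
      Real.one_rpow]
    exact ⟨by linarith, by linarith [hx.2.1]⟩
  | succ n ih =>
    have hTx := DeltaP_subset_Ioo T n hx.1
    obtain ⟨hlower, hupper⟩ := ih hx.1
    have hmem : 1 - T x ∈ Set.Icc (0 : ℝ) 1 := ⟨by linarith [hTx.2], by linarith [hTx.1]⟩
    have hiter := fun k => Set.Ioc_subset_Icc_self (neutralBranch_iterate_mem_Ioc hγ k)
    rw [hT.one_sub_eq_neutralBranch hx.2 hTx.1, Function.iterate_succ_apply' _ (n + 1)]
    exact ⟨monotoneOn_neutralBranch hγ (hiter _) hmem hlower,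
      (monotoneOn_neutralBranch hγ hmem (hiter _) hupper).trans_eq
        (Function.iterate_succ_apply' _ n 1).symm⟩

/-- Oddness of `T` reduces distance estimates on `Δ_n^±` to `Δ_n^+`. -/
lemma exists_mem_DeltaP_abs_sub_eq (hT : IsPikovsky γ T) (hx : x ∈ signedDelta T σ n)
    (hy : y ∈ signedDelta T σ n) :
    ∃ x' ∈ DeltaP T n, ∃ y' ∈ DeltaP T n,
      |x' - y'| = |x - y| ∧ |T x' - T y'| = |T x - T y| := by
  cases σ with
  | true => exact ⟨x, hx, y, hy, rfl, rfl⟩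
  | false =>
    refine ⟨-x, hT.neg_mem_DeltaP hx, -y, hT.neg_mem_DeltaP hy, ?_, ?_⟩
    · rw [neg_sub_neg, abs_sub_comm]
    · rw [hT.map_neg (DeltaM_subset_Ioo T n hx), hT.map_neg (DeltaM_subset_Ioo T n hy),
        neg_sub_neg, abs_sub_comm]

lemma abs_sub_le_of_mem_signedDelta (hγ : 1 < γ) (hT : IsPikovsky γ T)
    (hx : x ∈ signedDelta T σ n) (hy : y ∈ signedDelta T σ n) :
    |x - y| ≤ cellConst γ * ((n + 1 : ℕ) : ℝ) ^ (-(γ / (γ - 1))) := by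
  obtain ⟨x', hx', y', hy', hxy, -⟩ := hT.exists_mem_DeltaP_abs_sub_eq hx hy
  rw [← hxy, ← abs_neg, ← sub_sub_sub_cancel_left _ _ 1, neg_sub]
  exact (Real.dist_le_of_mem_Icc (hT.one_sub_mem_Icc_neutralBranch_iterate hγ.le hx')
    (hT.one_sub_mem_Icc_neutralBranch_iterate hγ.le hy')).trans
      (neutralBranch_iterate_sub_succ_le hγ n)

lemma abs_sub_le_half_abs_map_sub (hγ : 1 ≤ γ) (hT : IsPikovsky γ T)
    (hx : x ∈ signedDelta T σ 0) (hy : y ∈ signedDelta T σ 0) :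
    |x - y| ≤ 1 / 2 * |T x - T y| := by
  obtain ⟨x', hx', y', hy', hxy, hTxy⟩ := hT.exists_mem_DeltaP_abs_sub_eq hx hy
  have hmem : ∀ {z}, z ∈ DeltaP T 0 → 1 + T z ∈ Set.Icc (0 : ℝ) 1 := fun hz =>
    ⟨by linarith [hz.1.1], by linarith [hz.1.2]⟩
  have hpow := abs_rpow_sub_rpow_le hγ (hmem hx') (hmem hy')
  rw [add_sub_add_left_eq_sub] at hpow
  rw [← hxy, ← hTxy]
  calc |x' - y'| = |((1 + T x') ^ γ - (1 + T y') ^ γ) / (2 * γ)| := by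
        rw [sub_div, ← hT.eq_rpow_div_of_map_neg hx'.2 hx'.1.2,
          ← hT.eq_rpow_div_of_map_neg hy'.2 hy'.1.2]
    _ = |(1 + T x') ^ γ - (1 + T y') ^ γ| / (2 * γ) := by
      rw [abs_div, abs_of_pos (show 0 < 2 * γ by linarith)]
    _ ≤ γ * |T x' - T y'| / (2 * γ) := by gcongr
    _ = 1 / 2 * |T x' - T y'| := by field_simp

lemma abs_sub_le_abs_map_sub (hγ : 1 ≤ γ) (hT : IsPikovsky γ T)
    (hx : x ∈ signedDelta T σ n) (hy : y ∈ signedDelta T σ n) : |x - y| ≤ |T x - T y| := by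
  cases n with
  | zero => linarith [hT.abs_sub_le_half_abs_map_sub hγ hx hy, abs_nonneg (x - y)]
  | succ n =>
    obtain ⟨x', hx', y', hy', hxy, hTxy⟩ := hT.exists_mem_DeltaP_abs_sub_eq hx hy
    have hx'T := DeltaP_subset_Ioo T n hx'.1
    have hy'T := DeltaP_subset_Ioo T n hy'.1
    have := abs_neutralBranch_sub_le hγ (v := 1 - T x') (w := 1 - T y')
      ⟨by linarith [hx'T.2], by linarith [hx'T.1]⟩ ⟨by linarith [hy'T.2], by linarith [hy'T.1]⟩
    rwa [← hT.one_sub_eq_neutralBranch hx'.2 hx'T.1, ← hT.one_sub_eq_neutralBranch hy'.2 hy'T.1,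
      sub_sub_sub_cancel_left, sub_sub_sub_cancel_left, abs_sub_comm y', abs_sub_comm (T y'),
      hxy, hTxy] at this

lemma abs_sub_le_abs_iterate_sub (hγ : 1 ≤ γ) (hT : IsPikovsky γ T)
    (hx : x ∈ signedDelta T σ n) (hy : y ∈ signedDelta T σ n) :
    |x - y| ≤ |T^[n] x - T^[n] y| := by
  induction n generalizing x y with
  | zero => rfl
  | succ n ih =>
    exact (hT.abs_sub_le_abs_map_sub hγ hx hy).trans
      (ih (mapsTo_signedDelta_succ T σ n hx) (mapsTo_signedDelta_succ T σ n hy))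

lemma abs_sub_le_half_abs_iterate_sub (hγ : 1 ≤ γ) (hT : IsPikovsky γ T) (hn : 1 ≤ n)
    (hx : x ∈ signedSmallDelta T σ n) (hy : y ∈ signedSmallDelta T σ n) :
    |x - y| ≤ 1 / 2 * |T^[n] x - T^[n] y| := by
  obtain ⟨n, rfl⟩ := Nat.exists_eq_add_of_le' hn
  have hfirst := hT.abs_sub_le_half_abs_map_sub hγ (signedSmallDelta_subset T σ _ hx)
    (signedSmallDelta_subset T σ _ hy)
  have hrest := hT.abs_sub_le_abs_iterate_sub hγ (mapsTo_signedSmallDelta_succ T σ n hx)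
    (mapsTo_signedSmallDelta_succ T σ n hy)
  rw [Function.iterate_succ_apply, Function.iterate_succ_apply]
  linarith

lemma abs_sub_le_of_mem_signedSmallDelta (hγ : 1 < γ) (hT : IsPikovsky γ T) (hn : 1 ≤ n)
    (hx : x ∈ signedSmallDelta T σ n) (hy : y ∈ signedSmallDelta T σ n) :
    |x - y| ≤ cellConst γ * (n : ℝ) ^ (-(γ / (γ - 1))) := by
  obtain ⟨n, rfl⟩ := Nat.exists_eq_add_of_le' hn
  have hfirst := hT.abs_sub_le_abs_map_sub hγ.le (signedSmallDelta_subset T σ _ hx)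
    (signedSmallDelta_subset T σ _ hy)
  exact hfirst.trans (hT.abs_sub_le_of_mem_signedDelta hγ (mapsTo_signedSmallDelta_succ T σ n hx)
    (mapsTo_signedSmallDelta_succ T σ n hy))

end IsPikovsky

section Cylinder

variable {T : ℝ → ℝ} {p : ℕ} {ℓ : ℕ → ℕ} {x y : ℝ}

lemma iterate_mem_smallDelta_of_mem_cylinder (hx : x ∈ cylinder T p ℓ) {j : ℕ} (hj : j < p) :
    T^[ℓ j] x ∈ smallDelta T (ℓ (j + 1) - ℓ j) :=
  Set.mem_iInter₂.1 hx.2 j (Finset.mem_range.2 hj)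

lemma map_mem_bigDelta {n : ℕ} (hx : x ∈ smallDelta T (n + 1) ∪ bigDelta T (n + 1)) :
    T x ∈ bigDelta T n := by
  rw [smallDelta_eq_iUnion, bigDelta_eq_iUnion] at hx
  rw [bigDelta_eq_iUnion]
  rcases hx with hx | hx <;> obtain ⟨σ, hσ⟩ := Set.mem_iUnion.1 hx
  · exact Set.mem_iUnion_of_mem _ (mapsTo_signedSmallDelta_succ T σ n hσ)
  · exact Set.mem_iUnion_of_mem _ (mapsTo_signedDelta_succ T σ n hσ)

lemma iterate_pred_map {n : ℕ} (hn : 1 ≤ n) (T : ℝ → ℝ) (x : ℝ) : T^[n - 1] (T x) = T^[n] x := by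
  rw [← Function.iterate_succ_apply, Nat.succ_eq_add_one, Nat.sub_add_cancel hn]

lemma image_cylinder_subset_of_one_lt (hℓ : MonotoneOn ℓ (Set.Iic p)) (h0 : 1 < ℓ 0) :
    T '' cylinder T p ℓ ⊆ cylinder T p (fun j => ℓ j - 1) := by
  have hone : ∀ j ≤ p, 1 ≤ ℓ j := fun j hj =>
    h0.le.trans (hℓ (Nat.zero_le p) hj (Nat.zero_le j))
  rintro _ ⟨x, hx, rfl⟩
  refine ⟨.inr (map_mem_bigDelta ?_), Set.mem_iInter₂.2 fun j hj => ?_⟩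
  · rw [Nat.sub_add_cancel h0.le]
    exact hx.1
  · have hjp := Finset.mem_range.1 hj
    rw [Set.mem_preimage, iterate_pred_map (hone j hjp.le),
      Nat.sub_sub_sub_cancel_right (hone j hjp.le)]
    exact iterate_mem_smallDelta_of_mem_cylinder hx hjp

lemma image_cylinder_subset_of_eq_one (hℓ : MonotoneOn ℓ (Set.Iic (p + 1))) (h0 : ℓ 0 = 1) :
    T '' cylinder T (p + 1) ℓ ⊆ cylinder T p (fun j => ℓ (j + 1) - 1) := by
  have hone : ∀ j ≤ p + 1, 1 ≤ ℓ j := fun j hj =>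
    h0 ▸ hℓ (Nat.zero_le _) hj (Nat.zero_le j)
  rintro _ ⟨x, hx, rfl⟩
  refine ⟨.inl ?_, Set.mem_iInter₂.2 fun j hj => ?_⟩
  · simpa [h0] using iterate_mem_smallDelta_of_mem_cylinder hx p.succ_pos
  · have hjp : j + 1 < p + 1 := Nat.succ_lt_succ (Finset.mem_range.1 hj)
    rw [Set.mem_preimage, iterate_pred_map (hone _ hjp.le),
      Nat.sub_sub_sub_cancel_right (hone _ hjp.le)]
    exact iterate_mem_smallDelta_of_mem_cylinder hx hjp

lemma exists_image_iterate_cylinder_subset (T : ℝ → ℝ) (hℓ : StrictMonoOn ℓ (Set.Iic p))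
    (h0 : 1 ≤ ℓ 0) {m : ℕ} (hm : m < ℓ p) :
    ∃ (p' : ℕ) (ℓ' : ℕ → ℕ), StrictMonoOn ℓ' (Set.Iic p') ∧ 1 ≤ ℓ' 0 ∧ ℓ' p' = ℓ p - m ∧
      T^[m] '' cylinder T p ℓ ⊆ cylinder T p' ℓ' := by
  induction m generalizing p ℓ with
  | zero => exact ⟨p, ℓ, hℓ, h0, rfl, by simp⟩
  | succ m ih =>
    have hone : ∀ j ≤ p, 1 ≤ ℓ j := fun j hj =>
      h0.trans (hℓ.monotoneOn (Nat.zero_le p) hj (Nat.zero_le j))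
    obtain ⟨q, k, hk, hk0, hkq, hsub⟩ : ∃ (q : ℕ) (k : ℕ → ℕ), StrictMonoOn k (Set.Iic q) ∧
        1 ≤ k 0 ∧ k q = ℓ p - 1 ∧ T '' cylinder T p ℓ ⊆ cylinder T q k := by
      rcases h0.lt_or_eq with h1 | h1
      · exact ⟨p, fun j => ℓ j - 1,
          fun i hi j hj hij => Nat.sub_lt_sub_right (hone i hi) (hℓ hi hj hij),
          Nat.le_sub_of_add_le h1, rfl, image_cylinder_subset_of_one_lt hℓ.monotoneOn h1⟩
      · cases p with
        | zero => omega
        | succ p =>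
          refine ⟨p, fun j => ℓ (j + 1) - 1, fun i hi j hj hij => ?_, ?_, rfl,
            image_cylinder_subset_of_eq_one hℓ.monotoneOn h1.symm⟩
          · exact Nat.sub_lt_sub_right (hone _ (Nat.succ_le_succ hi))
              (hℓ (Nat.succ_le_succ hi) (Nat.succ_le_succ hj) (Nat.succ_lt_succ hij))
          · have : ℓ 0 < ℓ 1 := hℓ (by simp) (by simp) one_pos
            exact Nat.le_sub_one_of_lt (h0.trans_lt this)
    obtain ⟨p', ℓ', hℓ', hℓ'0, hℓ'p, hsub'⟩ := ih hk hk0 (by omega)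
    refine ⟨p', ℓ', hℓ', hℓ'0, by omega, ?_⟩
    rw [Function.iterate_succ, Set.image_comp]
    exact (Set.image_mono hsub).trans hsub'

lemma exists_iterate_mem_signedDelta (hℓ : StrictMonoOn ℓ (Set.Iic p))
    (hx : x ∈ cylinder T p ℓ) (hy : y ∈ cylinder T p ℓ)
    (h0 : ∃ σ, T^[ℓ 0] x ∈ signedDelta T σ 0 ∧ T^[ℓ 0] y ∈ signedDelta T σ 0) {j : ℕ}
    (hj : j ≤ p) :
    ∃ σ, T^[ℓ j] x ∈ signedDelta T σ 0 ∧ T^[ℓ j] y ∈ signedDelta T σ 0 := by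
  induction j with
  | zero => exact h0
  | succ j ih =>
    obtain ⟨σ, hσx, hσy⟩ := ih (by omega)
    have hlt : ℓ j < ℓ (j + 1) := hℓ (Nat.le_of_succ_le hj) hj j.lt_succ_self
    have hnext : ∀ {z}, z ∈ cylinder T p ℓ → T^[ℓ j] z ∈ signedDelta T σ 0 →
        T^[ℓ (j + 1)] z ∈ signedDelta T (!σ) 0 := by
      intro z hz hσz
      have := mapsTo_iterate_signedSmallDelta T σ (Nat.sub_pos_of_lt hlt)
        (mem_signedSmallDelta_of_mem_smallDelta hσz (iterate_mem_smallDelta_of_mem_cylinder hz hj))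
      rwa [← Function.iterate_add_apply, Nat.sub_add_cancel hlt.le] at this
    exact ⟨!σ, hnext hx hσx, hnext hy hσy⟩

end Cylinder

/-- The constant `C` in the bound `C * ℓ_p ^ (-(γ / (γ - 1)))` for the diameter of the part of the
cylinder `C_n(ℓ_0, …, ℓ_p)` lying in one of `Δ_{ℓ_0}^±`, `δ_{ℓ_0}^±`. -/
def cylinderConst (γ : ℝ) : ℝ :=
  2 * (cellConst γ * (1 - (1 / 2 : ℝ) ^ (1 / (γ / (γ - 1)))) ^ (-(γ / (γ - 1))))

lemma cylinderConst_pos {γ : ℝ} (hγ : 1 < γ) : 0 < cylinderConst γ := by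
  have : 0 < γ / (γ - 1) := div_pos (by linarith) (sub_pos.2 hγ)
  have hq : (1 / 2 : ℝ) ^ (1 / (γ / (γ - 1))) < 1 :=
    Real.rpow_lt_one (by norm_num) (by norm_num) (by positivity)
  have := Real.rpow_pos_of_pos (sub_pos.2 hq) (-(γ / (γ - 1)))
  have := cellConst_pos hγ
  unfold cylinderConst
  positivity

namespace IsPikovsky

variable {γ : ℝ} {T : ℝ → ℝ} {p : ℕ} {ℓ : ℕ → ℕ} {x y : ℝ}

lemma abs_iterate_sub_le_of_mem_cylinder (hγ : 1 < γ) (hT : IsPikovsky γ T)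
    (hℓ : StrictMonoOn ℓ (Set.Iic p)) (hx : x ∈ cylinder T p ℓ) (hy : y ∈ cylinder T p ℓ)
    (h0 : ∃ σ, T^[ℓ 0] x ∈ signedDelta T σ 0 ∧ T^[ℓ 0] y ∈ signedDelta T σ 0) {j : ℕ}
    (hj : j < p) :
    |T^[ℓ j] x - T^[ℓ j] y| ≤ 1 / 2 * |T^[ℓ (j + 1)] x - T^[ℓ (j + 1)] y| ∧
      |T^[ℓ j] x - T^[ℓ j] y| ≤ cellConst γ * ((ℓ (j + 1) : ℝ) - ℓ j) ^ (-(γ / (γ - 1))) := by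
  obtain ⟨σ, hσx, hσy⟩ := exists_iterate_mem_signedDelta hℓ hx hy h0 hj.le
  have hlt : ℓ j < ℓ (j + 1) := hℓ hj.le (Nat.succ_le_of_lt hj) j.lt_succ_self
  have hgap : 1 ≤ ℓ (j + 1) - ℓ j := Nat.sub_pos_of_lt hlt
  have hcell : ∀ {z}, z ∈ cylinder T p ℓ → T^[ℓ j] z ∈ signedDelta T σ 0 →
      T^[ℓ j] z ∈ signedSmallDelta T σ (ℓ (j + 1) - ℓ j) := fun hz hσz =>
    mem_signedSmallDelta_of_mem_smallDelta hσz (iterate_mem_smallDelta_of_mem_cylinder hz hj)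
  constructor
  · have := hT.abs_sub_le_half_abs_iterate_sub hγ.le hgap (hcell hx hσx) (hcell hy hσy)
    simpa only [← Function.iterate_add_apply, Nat.sub_add_cancel hlt.le] using this
  · have := hT.abs_sub_le_of_mem_signedSmallDelta hγ hgap (hcell hx hσx) (hcell hy hσy)
    rwa [Nat.cast_sub hlt.le] at this

lemma abs_sub_le_of_mem_cylinder (hγ : 1 < γ) (hT : IsPikovsky γ T)
    (hℓ : StrictMonoOn ℓ (Set.Iic p)) (hℓ0 : 1 ≤ ℓ 0)
    (hx : x ∈ cylinder T p ℓ) (hy : y ∈ cylinder T p ℓ)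
    (h0 : ∃ σ, T^[ℓ 0] x ∈ signedDelta T σ 0 ∧ T^[ℓ 0] y ∈ signedDelta T σ 0)
    (hexpand : |x - y| ≤ |T^[ℓ 0] x - T^[ℓ 0] y|)
    (hcell : |x - y| ≤ cellConst γ * (ℓ 0 : ℝ) ^ (-(γ / (γ - 1)))) :
    |x - y| ≤ cylinderConst γ * (ℓ p : ℝ) ^ (-(γ / (γ - 1))) := by
  -- Halving the initial distance makes the first step, which need not expand, expand by `2` too.
  let t : ℕ → ℝ
    | 0 => 0
    | j + 1 => ℓ j
  let d : ℕ → ℝ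
    | 0 => |x - y| / 2
    | j + 1 => |T^[ℓ j] x - T^[ℓ j] y|
  have ht : StrictMonoOn t (Set.Iic (p + 1)) := by
    refine strictMonoOn_Iic_of_lt_succ fun j hj => ?_
    cases j with
    | zero => exact Nat.cast_pos.2 hℓ0
    | succ j =>
      exact Nat.cast_lt.2 (hℓ (by simp; omega) (by simp; omega) j.lt_succ_self)
  have hd : ∀ j ≤ p, d j ≤ cellConst γ * (t (j + 1) - t j) ^ (-(γ / (γ - 1))) := by
    rintro (_ | j) hj
    · simp only [d, t, sub_zero]
      linarith [abs_nonneg (x - y)]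
    · exact (hT.abs_iterate_sub_le_of_mem_cylinder hγ hℓ hx hy h0 hj).2
  have hstep : ∀ j < p, d j ≤ 1 / 2 * d (j + 1) := by
    rintro (_ | j) hj
    · simp only [d]
      linarith
    · exact (hT.abs_iterate_sub_le_of_mem_cylinder hγ hℓ hx hy h0 (by omega)).1
  have hs : 0 < γ / (γ - 1) := div_pos (by linarith) (by linarith)
  have := le_mul_rpow_neg_of_contraction hs (by norm_num) (by norm_num) (cellConst_pos hγ).le p d t
    ht hd hstep
  simp only [d, t, sub_zero] at this
  rw [cylinderConst]
  linarith

lemma pikMeasure_cylinder_le (hγ : 1 < γ) (hT : IsPikovsky γ T) (hℓ : StrictMonoOn ℓ (Set.Iic p))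
    (hℓ0 : 1 ≤ ℓ 0) :
    pikMeasure (cylinder T p ℓ) ≤
      ENNReal.ofReal (4 * cylinderConst γ * (ℓ p : ℝ) ^ (-(γ / (γ - 1)))) := by
  have hcover : cylinder T p ℓ ⊆
      ⋃ i, Sum.elim (signedSmallDelta T · (ℓ 0)) (signedDelta T · (ℓ 0)) i := by
    simp only [Set.iUnion_sum, Sum.elim_inl, Sum.elim_inr, ← smallDelta_eq_iUnion,
      ← bigDelta_eq_iUnion]
    exact Set.inter_subset_left
  have hvol := volume_le_card_mul_of_subset_iUnion hcover
    (D := cylinderConst γ * (ℓ p : ℝ) ^ (-(γ / (γ - 1)))) ?_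
  · refine (pikMeasure_le_volume _).trans (hvol.trans_eq ?_)
    rw [mul_assoc, ENNReal.ofReal_mul zero_le_four, Fintype.card_sum, Fintype.card_bool]
    norm_num
  rintro (σ | σ) x ⟨hx, hxσ⟩ y ⟨hy, hyσ⟩
  · have hmaps := mapsTo_iterate_signedSmallDelta T σ hℓ0
    have hexpand := hT.abs_sub_le_half_abs_iterate_sub hγ.le hℓ0 hxσ hyσ
    exact hT.abs_sub_le_of_mem_cylinder hγ hℓ hℓ0 hx hy ⟨!σ, hmaps hxσ, hmaps hyσ⟩
      (by linarith [abs_nonneg (x - y)]) (hT.abs_sub_le_of_mem_signedSmallDelta hγ hℓ0 hxσ hyσ)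
  · have hmaps := mapsTo_iterate_signedDelta T σ (ℓ 0)
    refine hT.abs_sub_le_of_mem_cylinder hγ hℓ hℓ0 hx hy ⟨σ, hmaps hxσ, hmaps hyσ⟩
      (hT.abs_sub_le_abs_iterate_sub hγ.le hxσ hyσ)
      ((hT.abs_sub_le_of_mem_signedDelta hγ hxσ hyσ).trans ?_)
    have hs : 0 ≤ γ / (γ - 1) := div_nonneg (by linarith) (by linarith)
    have := cellConst_pos hγ
    gcongr cellConst γ * ?_
    exact Real.rpow_le_rpow_of_nonpos (Nat.cast_pos.2 hℓ0) (by simp) (neg_nonpos.2 hs)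

end IsPikovsky

theorem pikovsky_cylinder_image_estimate_general (γ : ℝ) (hγ : 1 < γ) :
    ∃ Cγ : ℝ, 0 < Cγ ∧ ∀ T : ℝ → ℝ, IsPikovsky γ T → ∀ (p : ℕ) (ℓ : ℕ → ℕ),
      1 ≤ ℓ 0 → (∀ j < p, ℓ j < ℓ (j + 1)) → ∀ n ≤ ℓ p, ∀ m < n,
        pikMeasure (T^[m] '' cylinder T p ℓ) ≤
          ENNReal.ofReal (Cγ * ((n - m : ℕ) : ℝ) ^ (-(γ / (γ - 1)))) := by
  have hC : 0 < 4 * cylinderConst γ := mul_pos four_pos (cylinderConst_pos hγ)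
  refine ⟨4 * cylinderConst γ, hC, fun T hT p ℓ h0 hℓ n hn m hm => ?_⟩
  obtain ⟨p', ℓ', hℓ', h0', hlast, hsub⟩ :=
    exists_image_iterate_cylinder_subset T (strictMonoOn_Iic_of_lt_succ hℓ) h0 (hm.trans_le hn)
  have hs : 0 ≤ γ / (γ - 1) := div_nonneg (by linarith) (by linarith)
  calc pikMeasure (T^[m] '' cylinder T p ℓ) ≤ pikMeasure (cylinder T p' ℓ') := measure_mono hsub
    _ ≤ ENNReal.ofReal (4 * cylinderConst γ * (ℓ' p' : ℝ) ^ (-(γ / (γ - 1)))) :=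
      hT.pikMeasure_cylinder_le hγ hℓ' h0'
    _ ≤ ENNReal.ofReal (4 * cylinderConst γ * ((n - m : ℕ) : ℝ) ^ (-(γ / (γ - 1)))) := by
      gcongr ENNReal.ofReal (_ * ?_)
      refine Real.rpow_le_rpow_of_nonpos (Nat.cast_pos.2 (Nat.sub_pos_of_lt hm)) ?_
        (neg_nonpos.2 hs)
      rw [hlast]
      exact_mod_cast Nat.sub_le_sub_right hn m

/-- Proposition 5.7 of the paper: for `γ > 1` and the Pikovsky map `T` with
parameter `γ` there is a constant `C_γ > 0` depending only on `γ` such that for every `n ≥ 1`,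
every admissible tuple `(ℓ₀,…,ℓ_p)` and every `0 ≤ ℓ < n`,
`λ(T^ℓ(C_n(ℓ₀,…,ℓ_p))) ≤ C_γ (n−ℓ)^{−γ/(γ−1)}`. -/
theorem pikovsky_cylinder_image_estimate (γ : ℝ) (hγ : 1 < γ) (T : ℝ → ℝ)
    (hT : IsPikovsky γ T) :
    ∃ Cγ : ℝ, 0 < Cγ ∧
      ∀ n : ℕ, 1 ≤ n → ∀ (p : ℕ) (ℓseq : ℕ → ℕ),
        1 ≤ ℓseq 0 → (∀ j < p, ℓseq j < ℓseq (j+1)) →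
        (p = 0 → n < ℓseq 0) → (0 < p → ℓseq (p-1) ≤ n ∧ n < ℓseq p) →
        ∀ ℓ : ℕ, ℓ < n →
          pikMeasure (T^[ℓ] '' cylinder T p ℓseq)
            ≤ ENNReal.ofReal (Cγ * (((n - ℓ : ℕ) : ℝ) ^ (-(γ / (γ - 1))))) := by
  obtain ⟨C, hC, hbound⟩ := pikovsky_cylinder_image_estimate_general γ hγ
  exact ⟨C, hC, fun n _ p ℓ h0 hℓ hn0 hnp => hbound T hT p ℓ h0 hℓ n
    (p.eq_zero_or_pos.elim (fun hp => by simpa only [hp] using (hn0 hp).le)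
      (fun hp => (hnp hp).2.le))⟩

end
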